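/- For every decorated permutation τ of {1,…,n} possessing at least one undecorated letter and every k with 1 ≤ k ≤ n+1, revmaj(δ_k(τ)) = revmaj(τ) + (n+1−k). -/

import Mathlib

/-!
Reversing the word, `revmaj` of a word of length `n` is the sum of `n - j` over the ascents
`j < n` (`revmaj_eq_sum`). Prepending `τ₀ = 0` adds an ascent of weight `n` at position `0`, and
`k + τ` is exactly this longer word with `k` added modulo `n + 1`. Call the letter `τ_j` wrapped
when `τ_j > n + 1 - k`, with indicator `w j`. Adding `k` modulo `n + 1` changes the ascent
indicator at `j` by `w j - w (j + 1)` (`ascent_shift`). Summed by parts against the weights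
`n - j`, this change contributes minus the number of wrapped letters (`sum_by_parts`), and that
number is `k - 1` because `τ` is a permutation (`sum_wrapped`). The total is therefore
`revmaj τ + n - (k - 1)`.
-/

open Finset

namespace QEuler

/-! ### Entries of a permutation of `{1,…,n}`, with the convention `σ₀ = 0`.
A permutation `σ ∈ S_n` is represented by `Equiv.Perm (Fin n)`; its entry at
position `i ∈ {1,…,n}` is `(σ (i-1)).val + 1 ∈ {1,…,n}`, and all other
positions (in particular position `0`) carry the value `0`. -/

def ent {n : ℕ} (σ : Equiv.Perm (Fin n)) (i : ℕ) : ℕ :=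
  if h : 1 ≤ i ∧ i ≤ n then ((σ ⟨i - 1, by omega⟩ : Fin n) : ℕ) + 1 else 0

/-- Decorations: a set `D : Finset (Fin n)` records the decorated positions,
`j : Fin n` encoding position `j+1 ∈ {1,…,n}`.  `isDec D i` tells whether
position `i` is decorated (position `0` never is). -/
def isDec {n : ℕ} (D : Finset (Fin n)) (i : ℕ) : Bool :=
  if h : 1 ≤ i ∧ i ≤ n then decide ((⟨i - 1, by omega⟩ : Fin n) ∈ D) else false

/-- Number of decorated positions among `{1,…,n}` for a decoration predicate. -/
def decCount (n : ℕ) (D : ℕ → Bool) : ℕ :=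
  ((Finset.Icc 1 n).filter fun i => D i = true).card

/-! ### Major index and reverse major index -/

/-- Major index of the word `E 1, E 2, …, E n`. -/
def maj (n : ℕ) (E : ℕ → ℕ) : ℕ :=
  ∑ i ∈ Finset.Icc 1 (n - 1), if E (i + 1) < E i then i else 0

/-- Reverse major index: the major index of the reversed word `E n, …, E 1`. -/
def revmaj (n : ℕ) (E : ℕ → ℕ) : ℕ := maj n fun i => E (n + 1 - i)

/-! ### Decreasing runs and schedule numbers -/

/-- The word is strictly decreasing along consecutive positions `p,…,q`. -/
def decOn (E : ℕ → ℕ) (p q : ℕ) : Prop := ∀ t ∈ Finset.Ico p q, E (t + 1) < E t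

instance (E : ℕ → ℕ) (p q : ℕ) : Decidable (decOn E p q) := by
  unfold decOn; infer_instance

/-- Start of the maximal strictly decreasing consecutive run containing position `i`. -/
def runStart (E : ℕ → ℕ) (i : ℕ) : ℕ :=
  Nat.find (show ∃ p, decOn E p i from ⟨i, fun t ht => absurd ht (by simp)⟩)

/-- End of the maximal strictly decreasing consecutive run containing position `i`
(positions are `0,…,n`). -/
def runEnd (n : ℕ) (E : ℕ → ℕ) (i : ℕ) : ℕ :=
  Nat.findGreatest (fun q => decOn E i q) n

/-- The schedule number of a decorated permutation (given by its entry word `E` on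
positions `0,…,n`, with `E 0 = 0`, and decoration predicate `D`) at position `i`.
If `σ_i` is undecorated and lies in run `r_j` it counts the undecorated entries of `r_j`
larger than `σ_i` plus the undecorated entries of `r_{j-1}` smaller than `σ_i`;
if `σ_i` is decorated it counts the undecorated entries of `r_j` smaller than `σ_i`
plus the undecorated entries of `r_{j+1}` larger than `σ_i`. -/
def schedNum (n : ℕ) (E : ℕ → ℕ) (D : ℕ → Bool) (i : ℕ) : ℕ :=
  if D i = true then
    ((Finset.Icc (runStart E i) (runEnd n E i)).filter fun t => D t = false ∧ E t < E i).card
      + (if runEnd n E i < n then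
          ((Finset.Icc (runEnd n E i + 1) (runEnd n E (runEnd n E i + 1))).filter
            fun t => D t = false ∧ E i < E t).card
        else 0)
  else
    ((Finset.Icc (runStart E i) (runEnd n E i)).filter fun t => D t = false ∧ E i < E t).card
      + (if runStart E i = 0 then 0 else
          ((Finset.Icc (runStart E (runStart E i - 1)) (runStart E i - 1)).filter
            fun t => D t = false ∧ E t < E i).card)

/-! ### Cyclic runs -/

/-- `σ_i,…,σ_j` is a cyclic (decreasing) run: for some shift `k`, the residues
`σ_t + k (mod n+1)` are strictly decreasing for `t = i,…,j`. -/
def IsCyclicRun (n : ℕ) (E : ℕ → ℕ) (i j : ℕ) : Prop :=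
  i ≤ j ∧ j ≤ n ∧ ∃ k : ℕ, ∀ t ∈ Finset.Ico i j, (E (t + 1) + k) % (n + 1) < (E t + k) % (n + 1)

/-- A cyclic run which cannot be extended to the left. -/
def LeftMaximalRun (n : ℕ) (E : ℕ → ℕ) (i j : ℕ) : Prop :=
  IsCyclicRun n E i j ∧ (i = 0 ∨ ¬ IsCyclicRun n E (i - 1) j)

/-- A cyclic run which cannot be extended to the right. -/
def RightMaximalRun (n : ℕ) (E : ℕ → ℕ) (i j : ℕ) : Prop :=
  IsCyclicRun n E i j ∧ (j = n ∨ ¬ IsCyclicRun n E i (j + 1))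

/-! ### Double ascents, descents, peaks, valleys; `inv3` and `monot` -/

def DblAsc (E : ℕ → ℕ) (j : ℕ) : Prop := E (j - 2) < E (j - 1) ∧ E (j - 1) < E j
def DblDesc (E : ℕ → ℕ) (j : ℕ) : Prop := E (j - 1) < E (j - 2) ∧ E j < E (j - 1)
def IsPeak (E : ℕ → ℕ) (j : ℕ) : Prop := E (j - 2) < E (j - 1) ∧ E j < E (j - 1)
def IsValley (E : ℕ → ℕ) (j : ℕ) : Prop := E (j - 1) < E (j - 2) ∧ E (j - 1) < E j

instance (E : ℕ → ℕ) (j : ℕ) : Decidable (DblAsc E j) := by unfold DblAsc; infer_instance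
instance (E : ℕ → ℕ) (j : ℕ) : Decidable (DblDesc E j) := by unfold DblDesc; infer_instance
instance (E : ℕ → ℕ) (j : ℕ) : Decidable (IsPeak E j) := by unfold IsPeak; infer_instance
instance (E : ℕ → ℕ) (j : ℕ) : Decidable (IsValley E j) := by unfold IsValley; infer_instance

/-- `(i,j)` is a 3-inversion. -/
def Inv3Pair (E : ℕ → ℕ) (i j : ℕ) : Prop :=
  (DblAsc E j ∧ E (j - 1) < E i ∧ E i < E j) ∨
  (DblDesc E j ∧ E j < E i ∧ E i < E (j - 1)) ∨
  (IsPeak E j ∧ E j < E i) ∨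
  (IsValley E j ∧ E i < E j)

instance (E : ℕ → ℕ) (i j : ℕ) : Decidable (Inv3Pair E i j) := by
  unfold Inv3Pair; infer_instance

/-- Number of 3-inversions of the word `E 1, …, E n` (with the convention `E 0 = 0`). -/
def inv3 (n : ℕ) (E : ℕ → ℕ) : ℕ :=
  ((Finset.Icc 1 n ×ˢ Finset.Icc 1 n).filter fun p => p.1 < p.2 ∧ Inv3Pair E p.1 p.2).card

/-- Number of double ascents and double descents. -/
def monot (n : ℕ) (E : ℕ → ℕ) : ℕ :=
  ((Finset.Icc 2 n).filter fun j => DblAsc E j ∨ DblDesc E j).card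

/-! ### Alternating permutations, `31-2` patterns and Chebikin's statistic -/

/-- `σ₁ > σ₂ < σ₃ > ⋯`. -/
def IsAlternating (n : ℕ) (E : ℕ → ℕ) : Prop :=
  ∀ i ∈ Finset.Icc 1 (n - 1), if Odd i then E (i + 1) < E i else E i < E (i + 1)

instance (n : ℕ) (E : ℕ → ℕ) : Decidable (IsAlternating n E) := by
  unfold IsAlternating; infer_instance

/-- The finset of alternating permutations of `{1,…,n}`. -/
def altPerms (n : ℕ) : Finset (Equiv.Perm (Fin n)) :=
  Finset.univ.filter fun σ => IsAlternating n (ent σ)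

/-- Number of `31-2` patterns: pairs `(i,j)` with `i+1 < j ≤ n` and `σ_j > σ_i > σ_{i+1}`. -/
def pat312 (n : ℕ) (E : ℕ → ℕ) : ℕ :=
  ((Finset.Icc 1 n ×ˢ Finset.Icc 1 n).filter fun p =>
    p.1 + 1 < p.2 ∧ E (p.1 + 1) < E p.1 ∧ E p.1 < E p.2).card

/-- Chebikin's alternating inversion statistic `î`. -/
def chebi (n : ℕ) (E : ℕ → ℕ) : ℕ :=
  ∑ i ∈ Finset.Icc 1 (n - 1),
    ((Finset.Icc (i + 1) n).filter fun j => if Odd i then E j < E i else E i < E j).card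

/-! ### Insertion `η_l`, structural attribute `ã`, the shift `k + τ` and `δ_k` -/

/-- The entry word of the insertion `η_l(σ) ∈ S_{n+1}` of the value `l` at the end of `σ ∈ S_n`. -/
def etaEnt (n l : ℕ) (E : ℕ → ℕ) (i : ℕ) : ℕ :=
  if i = n + 1 then l
  else if 1 ≤ i ∧ i ≤ n then (if l ≤ E i then E i + 1 else E i) else 0

/-- Structural attribute `ã(σ)` of `σ ∈ S_n`. -/
def atil (n : ℕ) (E : ℕ → ℕ) : ℕ :=
  if E (n - 1) < E n then n + 1 - E n else E n

/-- The entry word of `k + τ ∈ S_{n+1}` for `τ ∈ S_n`: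
`σ₀ = 0` and `σ_{i+1}` is the representative of `k + τ_i (mod n+1)` in `{1,…,n+1}`. -/
def shiftEnt (n k : ℕ) (E : ℕ → ℕ) (i : ℕ) : ℕ :=
  if i = 0 then 0
  else if (k + E (i - 1)) % (n + 1) = 0 then n + 1 else (k + E (i - 1)) % (n + 1)

/-- Position of the first (leftmost, among `1,…,n`) undecorated letter;
equals `n+1` if every position is decorated. -/
def firstUndecPos (n : ℕ) (D : ℕ → Bool) : ℕ :=
  Nat.find (show ∃ i, n < i ∨ (1 ≤ i ∧ D i = false) from ⟨n + 1, Or.inl (by omega)⟩)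

/-- `a(τ)`: the value of the first undecorated letter of `τ`. -/
def aVal (n : ℕ) (E : ℕ → ℕ) (D : ℕ → Bool) : ℕ := E (firstUndecPos n D)

/-- Decorations of the `k`-th descendant `δ_k(τ)`: position `1` is decorated iff
`k > n+1-a(τ)`, and for `i ≥ 2` position `i` is decorated iff position `i-1` of `τ` is. -/
def deltaDec (n k : ℕ) (D : ℕ → Bool) (aval : ℕ) (i : ℕ) : Bool :=
  if i = 0 then false
  else if i = 1 then decide (n + 1 - aval < k)
  else D (i - 1)

/-! ### Valley-decorated standardly labelled Dyck paths

A path of size `n` is encoded by its area word `a : Fin n → Fin n`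
(`a i` = number of whole squares between the `(i+1)`-st north step and the diagonal;
a word `a₁ ⋯ a_n` is the area word of a Dyck path iff `a₁ = 0` and `a_i ≤ a_{i-1} + 1`),
its labelling `w : Equiv.Perm (Fin n)`, and its decoration set `dv : Finset (Fin n)`
(`j` encoding the position `j+1`). -/

abbrev PathData (n : ℕ) := (Fin n → Fin n) × Equiv.Perm (Fin n) × Finset (Fin n)

/-- The area word, on positions `1,…,n`. -/
def aw {n : ℕ} (P : PathData n) (i : ℕ) : ℕ :=
  if h : 1 ≤ i ∧ i ≤ n then ((P.1 ⟨i - 1, by omega⟩ : Fin n) : ℕ) else 0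

/-- The labels, on positions `1,…,n`. -/
def lbl {n : ℕ} (P : PathData n) (i : ℕ) : ℕ := ent P.2.1 i

/-- Whether the `i`-th north step is decorated. -/
def pdec {n : ℕ} (P : PathData n) (i : ℕ) : Bool := isDec P.2.2 i

/-- The `i`-th north step is a contractible valley: `a_{i-1} > a_i`, or
`a_{i-1} = a_i` and `w_{i-1} < w_i`. -/
def ContractibleValley {n : ℕ} (P : PathData n) (i : ℕ) : Prop :=
  2 ≤ i ∧ i ≤ n ∧ (aw P i < aw P (i - 1) ∨ (aw P (i - 1) = aw P i ∧ lbl P (i - 1) < lbl P i))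

instance {n : ℕ} (P : PathData n) (i : ℕ) : Decidable (ContractibleValley P i) := by
  unfold ContractibleValley; infer_instance

/-- `P` encodes a genuine valley-decorated standardly labelled Dyck path:
the area word is valid, labels in a common column increase from bottom to top
(equivalently, consecutive north steps carry increasing labels), and every
decoration sits on a contractible valley. -/
def IsValidPath {n : ℕ} (P : PathData n) : Prop :=
  (1 ≤ n → aw P 1 = 0) ∧
  (∀ i ∈ Finset.Icc 2 n, aw P i ≤ aw P (i - 1) + 1) ∧
  (∀ i ∈ Finset.Icc 2 n, aw P i = aw P (i - 1) + 1 → lbl P (i - 1) < lbl P i) ∧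
  (∀ i ∈ Finset.Icc 1 n, pdec P i = true → ContractibleValley P i)

instance {n : ℕ} (P : PathData n) : Decidable (IsValidPath P) := by
  unfold IsValidPath; infer_instance

/-- The finset `stLD(n)^{•k}` of valley-decorated standardly labelled Dyck paths
of size `n` with exactly `k` decorated (contractible) valleys. -/
def stLD (n k : ℕ) : Finset (PathData n) :=
  Finset.univ.filter fun P => IsValidPath P ∧ P.2.2.card = k

/-- The area statistic. -/
def area {n : ℕ} (P : PathData n) : ℕ := ∑ i ∈ Finset.Icc 1 n, aw P i

/-- `(i,j)` is a primary diagonal inversion. -/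
def PrimaryDinv {n : ℕ} (P : PathData n) (i j : ℕ) : Prop :=
  aw P i = aw P j ∧ lbl P i < lbl P j ∧ pdec P i = false

/-- `(i,j)` is a secondary diagonal inversion. -/
def SecondaryDinv {n : ℕ} (P : PathData n) (i j : ℕ) : Prop :=
  aw P i = aw P j + 1 ∧ lbl P j < lbl P i ∧ pdec P i = false

instance {n : ℕ} (P : PathData n) (i j : ℕ) : Decidable (PrimaryDinv P i j) := by
  unfold PrimaryDinv; infer_instance
instance {n : ℕ} (P : PathData n) (i j : ℕ) : Decidable (SecondaryDinv P i j) := by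
  unfold SecondaryDinv; infer_instance

/-- The set of diagonal-inversion pairs `(i,j)`, `1 ≤ i < j ≤ n`. -/
def dinvPairs {n : ℕ} (P : PathData n) : Finset (ℕ × ℕ) :=
  (Finset.Icc 1 n ×ˢ Finset.Icc 1 n).filter fun p =>
    p.1 < p.2 ∧ (PrimaryDinv P p.1 p.2 ∨ SecondaryDinv P p.1 p.2)

/-- `dinv(P)`: number of primary and secondary diagonal inversions minus the
number of decorated valleys (a nonnegative quantity). -/
def dinv {n : ℕ} (P : PathData n) : ℕ := (dinvPairs P).card - P.2.2.card

/-! ### The diagonal word of a path -/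

/-- Position in the diagonal word of the label of the `i`-th north step:
labels are listed diagonal by diagonal, and within a diagonal in decreasing order. -/
def dwPos {n : ℕ} (P : PathData n) (i : ℕ) : ℕ :=
  ((Finset.Icc 1 n).filter fun i' =>
    aw P i' < aw P i ∨ (aw P i' = aw P i ∧ lbl P i ≤ lbl P i')).card

/-- The `j`-th letter of the diagonal word `dw(P)`. -/
def dwEnt {n : ℕ} (P : PathData n) (j : ℕ) : ℕ :=
  ∑ i ∈ (Finset.Icc 1 n).filter (fun i => dwPos P i = j), lbl P i

/-- Whether the `j`-th letter of the diagonal word is decorated. -/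
def dwDec {n : ℕ} (P : PathData n) (j : ℕ) : Bool :=
  decide (((Finset.Icc 1 n).filter fun i => dwPos P i = j ∧ pdec P i = true).Nonempty)

end QEuler

namespace QEuler

/-- All schedule numbers of the decorated permutation equal `1`. -/
def HasSchedOne (n : ℕ) (E : ℕ → ℕ) (D : ℕ → Bool) : Prop :=
  ∀ i ∈ Finset.Icc 1 n, schedNum n E D i = 1

instance (n : ℕ) (E : ℕ → ℕ) (D : ℕ → Bool) : Decidable (HasSchedOne n E D) := by
  unfold HasSchedOne; infer_instance

/-- The diagonal word of `P` is the decorated permutation `(σ, D)`. -/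
def DwEq {n : ℕ} (P : PathData n) (σ : Equiv.Perm (Fin n)) (D : Finset (Fin n)) : Prop :=
  (∀ j ∈ Finset.Icc 1 n, dwEnt P j = ent σ j) ∧ ∀ j ∈ Finset.Icc 1 n, dwDec P j = isDec D j

instance {n : ℕ} (P : PathData n) (σ : Equiv.Perm (Fin n)) (D : Finset (Fin n)) :
    Decidable (DwEq P σ D) := by
  unfold DwEq; infer_instance

end QEuler

open QEuler

/-- `revmaj` as a weighted count of ascents, with positions indexed from `0`. -/
lemma revmaj_eq_sum (m : ℕ) (E : ℕ → ℕ) :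
    (revmaj (m + 1) E : ℤ) =
      ∑ j ∈ range m, ((m : ℤ) - j) * (if E (j + 1) < E (j + 2) then 1 else 0) := by
  unfold revmaj maj
  push_cast
  refine Finset.sum_nbij' (fun i => m - i) (fun j => m - j) ?_ ?_ ?_ ?_ ?_
  · intro i hi
    simp only [mem_Icc, mem_range] at *
    omega
  · intro j hj
    simp only [mem_Icc, mem_range] at *
    omega
  · intro i hi
    simp only [mem_Icc] at *
    omega
  · intro j hj
    simp only [mem_range] at *
    omega
  · intro i hi
    simp only [mem_Icc] at hi
    have h1 : m + 1 - i = m - i + 1 := by omega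
    have h2 : m + 1 + 1 - i = m - i + 2 := by omega
    have h3 : ((m - i : ℕ) : ℤ) = m - i := by omega
    rw [h1, h2, h3]
    split_ifs <;> simp

lemma sum_by_parts (n : ℕ) (w : ℕ → ℤ) :
    ∑ j ∈ range n, ((n : ℤ) - j) * (w j - w (j + 1)) = n * w 0 - ∑ j ∈ range n, w (j + 1) := by
  induction n with
  | zero => simp
  | succ n ih =>
    have h : ∑ j ∈ range n, (((n + 1 : ℕ) : ℤ) - j) * (w j - w (j + 1)) =
        ∑ j ∈ range n, ((n : ℤ) - j) * (w j - w (j + 1)) + (w 0 - w n) := by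
      rw [← Finset.sum_range_sub' w n, ← Finset.sum_add_distrib]
      refine Finset.sum_congr rfl fun j _ => ?_
      push_cast
      ring
    rw [Finset.sum_range_succ, h, ih, Finset.sum_range_succ]
    push_cast
    ring

/-- The letter at position `j + 1` of `k + τ`, without reference to residues. -/
lemma shiftEnt_succ {n k : ℕ} (hk1 : 1 ≤ k) (hk2 : k ≤ n + 1) (E : ℕ → ℕ) (j : ℕ)
    (hE : E j ≤ n) :
    shiftEnt n k E (j + 1) = if n + 1 - k < E j then k + E j - (n + 1) else k + E j := by
  rw [shiftEnt, if_neg (Nat.succ_ne_zero j), Nat.add_sub_cancel]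
  rcases Nat.lt_or_ge (k + E j) (n + 1) with h | h
  · rw [Nat.mod_eq_of_lt h]
    split_ifs <;> omega
  · rw [Nat.mod_eq_sub_mod h, Nat.mod_eq_of_lt (by omega)]
    split_ifs <;> omega

/-- Effect of adding `k` modulo `n + 1` on the ascent indicator of two distinct letters. -/
lemma ascent_shift {n k : ℕ} (hk1 : 1 ≤ k) (hk2 : k ≤ n + 1) (E : ℕ → ℕ) (j : ℕ)
    (h1 : E j ≤ n) (h2 : E (j + 1) ≤ n) (hne : E j ≠ E (j + 1)) :
    (if shiftEnt n k E (j + 1) < shiftEnt n k E (j + 2) then 1 else 0 : ℤ) =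
      (if E j < E (j + 1) then 1 else 0) +
        ((if n + 1 - k < E j then 1 else 0) - (if n + 1 - k < E (j + 1) then 1 else 0)) := by
  rw [shiftEnt_succ hk1 hk2 E j h1, shiftEnt_succ hk1 hk2 E (j + 1) h2]
  split_ifs <;> omega

lemma ent_zero {n : ℕ} (τ : Equiv.Perm (Fin n)) : ent τ 0 = 0 := by simp [ent]

lemma ent_succ {n : ℕ} (τ : Equiv.Perm (Fin n)) (j : Fin n) :
    ent τ ((j : ℕ) + 1) = (τ j : ℕ) + 1 := by
  have := j.isLt
  simp [ent, Nat.succ_le_of_lt this]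

lemma ent_le {n : ℕ} (τ : Equiv.Perm (Fin n)) (j : ℕ) : ent τ j ≤ n := by
  unfold ent
  split_ifs with h
  · exact (τ _).isLt
  · exact Nat.zero_le _

lemma ent_ne {n : ℕ} (τ : Equiv.Perm (Fin n)) {j : ℕ} (hj : j < n) :
    ent τ j ≠ ent τ (j + 1) := by
  have h := ent_succ τ ⟨j, hj⟩
  rcases j with _ | j
  · rw [ent_zero]
    simp only at h
    omega
  · have h' := ent_succ τ ⟨j, by omega⟩
    simp only at h h'
    intro he
    have : (⟨j, by omega⟩ : Fin n) = ⟨j + 1, hj⟩ := τ.injective (Fin.ext (by omega))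
    simp at this

/-- Exactly `k - 1` letters of a permutation of `{1,…,n}` exceed `n + 1 - k`. -/
lemma sum_wrapped {n k : ℕ} (hk1 : 1 ≤ k) (hk2 : k ≤ n + 1) (τ : Equiv.Perm (Fin n)) :
    ∑ j ∈ range n, (if n + 1 - k < ent τ (j + 1) then 1 else 0 : ℤ) = k - 1 := by
  rw [Finset.sum_range]
  simp only [ent_succ]
  rw [Equiv.sum_comp τ (fun x : Fin n => (if n + 1 - k < (x : ℕ) + 1 then 1 else 0 : ℤ)),
    ← Finset.sum_range (fun x : ℕ => (if n + 1 - k < x + 1 then 1 else 0 : ℤ)),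
    Finset.sum_boole]
  have : (range n).filter (fun x => n + 1 - k < x + 1) = Finset.Ico (n + 1 - k) n := by
    ext x
    simp only [mem_filter, mem_range, mem_Ico]
    omega
  rw [this, Nat.card_Ico]
  omega

/-- For every decorated permutation `τ` of `{1,…,n}` possessing at least
one undecorated letter and every `1 ≤ k ≤ n+1`,
`revmaj(δ_k(τ)) = revmaj(τ) + (n+1−k)` (the underlying permutation of `δ_k(τ)` is `k+τ`). -/
theorem revmaj_of_delta {n : ℕ} (τ : Equiv.Perm (Fin n)) (D : Finset (Fin n))
    (hundec : ∃ i, 1 ≤ i ∧ i ≤ n ∧ isDec D i = false)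
    (k : ℕ) (hk1 : 1 ≤ k) (hk2 : k ≤ n + 1) :
    revmaj (n + 1) (shiftEnt n k (ent τ)) = revmaj n (ent τ) + (n + 1 - k) := by
  obtain ⟨i, hi1, hi2, -⟩ := hundec
  obtain ⟨m, rfl⟩ : ∃ m, n = m + 1 := ⟨n - 1, by omega⟩
  have key : (revmaj (m + 1 + 1) (shiftEnt (m + 1) k (ent τ)) : ℤ) =
      ∑ j ∈ range (m + 1), (((m + 1 : ℕ) : ℤ) - j) * (if ent τ j < ent τ (j + 1) then 1 else 0) +
        ∑ j ∈ range (m + 1), (((m + 1 : ℕ) : ℤ) - j) *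
          ((if m + 1 + 1 - k < ent τ j then 1 else 0) -
            (if m + 1 + 1 - k < ent τ (j + 1) then 1 else 0)) := by
    rw [revmaj_eq_sum, ← Finset.sum_add_distrib]
    refine Finset.sum_congr rfl fun j hj => ?_
    rw [ascent_shift hk1 hk2 (ent τ) j (ent_le τ _) (ent_le τ _) (ent_ne τ (mem_range.mp hj)),
      mul_add]
  rw [sum_by_parts (m + 1) (fun j => if m + 1 + 1 - k < ent τ j then 1 else 0),
    sum_wrapped hk1 hk2] at key
  -- Position `0` is an ascent of weight `m + 1`; the remaining ascents are those of `τ`.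
  have hasc : ∑ j ∈ range (m + 1),
      (((m + 1 : ℕ) : ℤ) - j) * (if ent τ j < ent τ (j + 1) then 1 else 0) =
        revmaj (m + 1) (ent τ) + (m + 1) := by
    have h0 : 0 < ent τ (0 + 1) := by
      have := ent_succ τ 0
      simp only [Fin.val_zero] at this
      omega
    rw [Finset.sum_range_succ', revmaj_eq_sum, ent_zero, if_pos h0]
    push_cast
    congr 1
    · refine Finset.sum_congr rfl fun j _ => ?_
      ring_nf
    · ring
  rw [hasc, ent_zero] at key
  simp only [Nat.not_lt_zero, if_false] at key
  zify [hk2]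
  rw [key]
  push_cast
  ring
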